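/- For every real number c and every z ∈ ℂ ∖ ℤ, the symmetric limit lim_{N→∞} ∑_{n=−N}^{N} e^{2πi c (z+n)} / (2πi (z+n)) exists and equals R_c(e^{2πi z}); explicitly, writing y = e^{2πi z}, this limit equals (1/2)·y^c·(y+1)/(y−1) when c ∈ ℤ, and equals y^{⌈c⌉}/(y−1) when c ∉ ℤ. -/

import Mathlib

noncomputable section

open Complex Filter Topology
open scoped Classical

/-- `ee x = e^{2πix}`. -/
def ee (x : ℂ) : ℂ := Complex.exp (2 * (Real.pi : ℂ) * Complex.I * x)

/-- The rational function `R_c`, defined as `(1/2)·y^c·(y+1)/(y−1)` when `c ∈ ℤ`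
(integer power `y^c`) and as `y^⌈c⌉/(y−1)` when `c ∉ ℤ`. -/
def Rc (c : ℝ) (y : ℂ) : ℂ :=
  if (⌈c⌉ : ℝ) = c then 1 / 2 * y ^ ⌈c⌉ * (y + 1) / (y - 1) else y ^ ⌈c⌉ / (y - 1)

/-!
Write `y = e^{2πiz}` and let `S_N(c)` be the symmetric partial sum. Differentiating in `c` gives
`S_N(b) - S_N(a) = ∫_a^b e^{2πitz} D_N(t) dt` with the Dirichlet kernel `D_N`, and Dini's criterion
shows that an endpoint `0` or `1` of the interval of integration contributes half the value of
`e^{2πitz}` there. Hence `S_N(1) - S_N(0) → (1 + y) / 2`, while the quasi-periodicity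
`S_N(c + 1) = y S_N(c)` makes the left-hand side `(y - 1) S_N(0)`: this is the case `c = 0`.
For `0 < c < 1` one adds `S_N(c) - S_N(0) → 1 / 2`, and quasi-periodicity does the rest.
-/

open MeasureTheory Set
open scoped Real FourierTransform Interval

section DirichletKernel

variable {E : Type*} [NormedAddCommGroup E] [NormedSpace ℂ E] {a b : ℝ}

theorem tendsto_intervalIntegral_fourierChar_smul_cocompact (g : ℝ → E) (a b : ℝ) :
    Tendsto (fun w : ℝ ↦ ∫ t in a..b, 𝐞 (-(t * w)) • g t) (cocompact ℝ) (𝓝 0) := by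
  have h := (Real.tendsto_integral_exp_smul_cocompact ((Ι a b).indicator g)).const_smul
    (if a ≤ b then 1 else -1 : ℝ)
  rw [smul_zero] at h
  refine h.congr fun w ↦ ?_
  rw [intervalIntegral.intervalIntegral_eq_integral_uIoc, ← integral_indicator measurableSet_uIoc]
  congr! 3
  exact (indicator_smul_apply (Ι a b) (fun t ↦ 𝐞 (-(t * w))) g _).symm

theorem sin_two_pi_mul_eq_fourierChar (x : ℝ) :
    (Real.sin (2 * π * x) : ℂ) = (𝐞 (-x) - 𝐞 x) * (I / 2) := by
  rw [Complex.ofReal_sin, Complex.sin, Real.fourierChar_apply, Real.fourierChar_apply]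
  push_cast
  ring_nf

theorem tendsto_intervalIntegral_sin_smul_cocompact {g : ℝ → E}
    (hg : IntervalIntegrable g volume a b) :
    Tendsto (fun w : ℝ ↦ ∫ t in a..b, Real.sin (2 * π * (t * w)) • g t) (cocompact ℝ) (𝓝 0) := by
  have hneg := tendsto_intervalIntegral_fourierChar_smul_cocompact g a b
  have hpos := hneg.comp (Homeomorph.neg ℝ).isClosedEmbedding.tendsto_cocompact
  have hInt (w : ℝ) : IntervalIntegrable (fun t ↦ 𝐞 (-(t * w)) • g t) volume a b :=
    hg.continuousOn_smul (f := fun t ↦ (𝐞 (-(t * w)) : ℂ)) (by fun_prop)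
  have h := (hneg.sub hpos).const_smul (I / 2)
  rw [sub_zero, smul_zero] at h
  refine h.congr fun w ↦ ?_
  rw [Function.comp_apply, Homeomorph.coe_neg, ← intervalIntegral.integral_sub (hInt w) (hInt (-w)),
    ← intervalIntegral.integral_smul]
  refine intervalIntegral.integral_congr fun t _ ↦ ?_
  simp only [Circle.smul_def, mul_neg, neg_neg]
  rw [← sub_smul, smul_smul, mul_comm, ← sin_two_pi_mul_eq_fourierChar, Complex.coe_smul]

/-- The Dirichlet kernel `D_N(t) = ∑_{|n| ≤ N} e^{2πint}` of period `1`, written with cosines so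
that it is real-valued. -/
def dirichletKernel (N : ℕ) (t : ℝ) : ℝ :=
  1 + 2 * ∑ n ∈ Finset.range N, Real.cos (2 * π * (n + 1) * t)

theorem continuous_dirichletKernel (N : ℕ) : Continuous (dirichletKernel N) := by
  unfold dirichletKernel
  fun_prop

theorem dirichletKernel_one_sub (N : ℕ) (t : ℝ) :
    dirichletKernel N (1 - t) = dirichletKernel N t := by
  have hcos (n : ℕ) : Real.cos (2 * π * (n + 1) * (1 - t)) = Real.cos (2 * π * (n + 1) * t) := by
    rw [← Real.cos_nat_mul_two_pi_sub _ (n + 1)]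
    push_cast
    ring_nf
  simp only [dirichletKernel, hcos]

theorem dirichletKernel_mul_sin (N : ℕ) (t : ℝ) :
    dirichletKernel N t * Real.sin (π * t) = Real.sin (2 * π * (t * (N + 1 / 2))) := by
  induction N with
  | zero =>
    have harg : 2 * π * (t * (1 / 2)) = π * t := by ring
    simp only [dirichletKernel, Finset.sum_range_zero, mul_zero, add_zero, one_mul,
      Nat.cast_zero, zero_add, harg]
  | succ N ih =>
    have hstep : dirichletKernel (N + 1) t =
        dirichletKernel N t + 2 * Real.cos (2 * π * (N + 1) * t) := by
      rw [dirichletKernel, dirichletKernel, Finset.sum_range_succ]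
      ring
    rw [hstep, add_mul, ih, ← eq_sub_iff_add_eq', Real.sin_sub_sin]
    push_cast
    ring_nf

theorem integral_dirichletKernel_zero_half (N : ℕ) :
    ∫ t in (0 : ℝ)..(1 / 2), dirichletKernel N t = 1 / 2 := by
  have hcos (n : ℕ) : ∫ t in (0 : ℝ)..(1 / 2), Real.cos (2 * π * (n + 1) * t) = 0 := by
    have hsin : Real.sin (2 * π * (n + 1) * (1 / 2)) = 0 := by
      rw [← Real.sin_nat_mul_pi (n + 1)]
      push_cast
      ring_nf
    rw [intervalIntegral.integral_comp_mul_left _ (by positivity), integral_cos, hsin]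
    simp
  have hInt (n : ℕ) : IntervalIntegrable (fun t : ℝ ↦ Real.cos (2 * π * (n + 1) * t))
      volume 0 (1 / 2) := Continuous.intervalIntegrable (by fun_prop) _ _
  simp only [dirichletKernel]
  rw [intervalIntegral.integral_add intervalIntegrable_const
      (Continuous.intervalIntegrable (by fun_prop) _ _),
    intervalIntegral.integral_const_mul, intervalIntegral.integral_finsetSum fun n _ ↦ hInt n]
  simp only [hcos, intervalIntegral.integral_const, Finset.sum_const_zero]
  norm_num

theorem sin_pi_mul_pos {t : ℝ} (ht : t ∈ Ioo (0 : ℝ) 1) : 0 < Real.sin (π * t) :=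
  Real.sin_pos_of_pos_of_lt_pi (mul_pos Real.pi_pos ht.1) (mul_lt_of_lt_one_right Real.pi_pos ht.2)

theorem sinc_pi_mul_pos {t : ℝ} (ht : t ∈ Ico (0 : ℝ) 1) : 0 < Real.sinc (π * t) := by
  rcases ht.1.eq_or_lt with rfl | h0
  · simp
  · rw [Real.sinc_of_ne_zero (by positivity)]
    exact div_pos (sin_pi_mul_pos ⟨h0, ht.2⟩) (by positivity)

theorem tendsto_integral_dirichletKernel_smul_of_inv_sin_smul {g : ℝ → E}
    (hg : IntervalIntegrable (fun t ↦ (Real.sin (π * t))⁻¹ • g t) volume a b)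
    (hsin : ∀ t ∈ uIoo a b, Real.sin (π * t) ≠ 0) :
    Tendsto (fun N ↦ ∫ t in a..b, dirichletKernel N t • g t) atTop (𝓝 0) := by
  have hfreq : Tendsto (fun N : ℕ ↦ (N : ℝ) + 1 / 2) atTop (cocompact ℝ) :=
    (tendsto_atTop_add_const_right _ _ tendsto_natCast_atTop_atTop).mono_right atTop_le_cocompact
  refine ((tendsto_intervalIntegral_sin_smul_cocompact hg).comp hfreq).congr fun N ↦ ?_
  refine intervalIntegral.integral_congr_uIoo fun t ht ↦ ?_
  simp only [← dirichletKernel_mul_sin, mul_smul, smul_inv_smul₀ (hsin t ht)]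

theorem tendsto_integral_dirichletKernel_smul_of_subset_Ioo {g : ℝ → E}
    (hg : IntervalIntegrable g volume a b) (hab : [[a, b]] ⊆ Ioo 0 1) :
    Tendsto (fun N ↦ ∫ t in a..b, dirichletKernel N t • g t) atTop (𝓝 0) := by
  have hsin : ∀ t ∈ [[a, b]], Real.sin (π * t) ≠ 0 := fun t ht ↦ (sin_pi_mul_pos (hab ht)).ne'
  have hcont : ContinuousOn (fun t ↦ (Real.sin (π * t))⁻¹) [[a, b]] :=
    ContinuousOn.inv₀ (by fun_prop) hsin
  exact tendsto_integral_dirichletKernel_smul_of_inv_sin_smul (hg.continuousOn_smul hcont)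
    fun t ht ↦ hsin t (uIoo_subset_uIcc_self ht)

theorem tendsto_integral_dirichletKernel_smul_const [CompleteSpace E] (hb : b ∈ Ioo (0 : ℝ) 1)
    (l : E) :
    Tendsto (fun N ↦ ∫ t in 0..b, dirichletKernel N t • l) atTop (𝓝 ((1 / 2 : ℝ) • l)) := by
  have hrest : Tendsto (fun N ↦ ∫ t in (1 / 2)..b, dirichletKernel N t • l) atTop (𝓝 0) :=
    tendsto_integral_dirichletKernel_smul_of_subset_Ioo intervalIntegrable_const
      (ordConnected_Ioo.uIcc_subset (by norm_num) hb)
  have hInt (N : ℕ) (u v : ℝ) :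
      IntervalIntegrable (fun t ↦ dirichletKernel N t • l) volume u v :=
    ((continuous_dirichletKernel N).smul continuous_const).intervalIntegrable u v
  have h := hrest.const_add ((1 / 2 : ℝ) • l)
  rw [add_zero] at h
  refine h.congr fun N ↦ ?_
  rw [← intervalIntegral.integral_add_adjacent_intervals (hInt N 0 (1 / 2)) (hInt N (1 / 2) b),
    intervalIntegral.integral_smul_const (a := 0), integral_dirichletKernel_zero_half]

theorem intervalIntegrable_inv_sin_smul_of_inv_smul {F : Type*} [NormedAddCommGroup F]
    [NormedSpace ℝ F] {g : ℝ → F} (hb : b ∈ Ioo (0 : ℝ) 1)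
    (hg : IntervalIntegrable (fun t ↦ t⁻¹ • g t) volume 0 b) :
    IntervalIntegrable (fun t ↦ (Real.sin (π * t))⁻¹ • g t) volume 0 b := by
  -- `t / sin (π t)` extends continuously to `t = 0` as `1 / (π sinc (π t))`.
  have hne : ∀ t ∈ [[0, b]], π * Real.sinc (π * t) ≠ 0 := by
    rw [uIcc_of_le hb.1.le]
    exact fun t ht ↦ (mul_pos Real.pi_pos (sinc_pi_mul_pos ⟨ht.1, ht.2.trans_lt hb.2⟩)).ne'
  have hcont : ContinuousOn (fun t ↦ (π * Real.sinc (π * t))⁻¹) [[0, b]] :=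
    ContinuousOn.inv₀ (by fun_prop) hne
  refine (hg.continuousOn_smul hcont).congr_uIoo fun t ht ↦ ?_
  have ht0 : 0 < t := (uIoo_of_le hb.1.le ▸ ht).1
  have hsin : π * Real.sinc (π * t) * t = Real.sin (π * t) := by
    rw [Real.sinc_of_ne_zero (by positivity)]
    field_simp
  simp only [smul_smul, ← mul_inv, hsin]

theorem tendsto_integral_dirichletKernel_smul_of_dini [CompleteSpace E] {g : ℝ → E} {l : E}
    (hb : b ∈ Ioo (0 : ℝ) 1)
    (hg : IntervalIntegrable (fun t ↦ t⁻¹ • (g t - l)) volume 0 b) :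
    Tendsto (fun N ↦ ∫ t in 0..b, dirichletKernel N t • g t) atTop (𝓝 ((1 / 2 : ℝ) • l)) := by
  have hIoo : uIoo 0 b ⊆ Ioo 0 1 := uIoo_of_le hb.1.le ▸ Ioo_subset_Ioo_right hb.2.le
  have hdiff := tendsto_integral_dirichletKernel_smul_of_inv_sin_smul
    (intervalIntegrable_inv_sin_smul_of_inv_smul hb hg) fun t ht ↦ (sin_pi_mul_pos (hIoo ht)).ne'
  have h := hdiff.add (tendsto_integral_dirichletKernel_smul_const hb l)
  rw [zero_add] at h
  refine h.congr fun N ↦ ?_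
  have hInt : IntervalIntegrable (fun t ↦ g t - l) volume 0 b :=
    (hg.continuousOn_smul continuousOn_id).congr_uIoo fun t ht ↦ smul_inv_smul₀ (hIoo ht).1.ne' _
  have hD {u : ℝ → E} (hu : IntervalIntegrable u volume 0 b) :
      IntervalIntegrable (fun t ↦ dirichletKernel N t • u t) volume 0 b :=
    hu.continuousOn_smul (continuous_dirichletKernel N).continuousOn
  rw [← intervalIntegral.integral_add (hD hInt) (hD intervalIntegrable_const)]
  simp only [← smul_add, sub_add_cancel]

theorem intervalIntegrable_slope {F : Type*} [NormedAddCommGroup F] [NormedSpace ℝ F] {g : ℝ → F}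
    (hg : Continuous g) (hg' : DifferentiableAt ℝ g a) :
    IntervalIntegrable (slope g a) volume a b := by
  have hcont : Continuous (dslope g a) := by
    rw [← continuousOn_univ, continuousOn_dslope univ_mem]
    exact ⟨hg.continuousOn, hg'⟩
  refine (hcont.intervalIntegrable a b).congr_uIoo fun t ht ↦ ?_
  exact dslope_of_ne g (by rintro rfl; simp at ht)

end DirichletKernel

theorem ee_add (x y : ℂ) : ee (x + y) = ee x * ee y := by
  simp only [ee, mul_add, Complex.exp_add]

theorem ee_zero : ee 0 = 1 := by simp [ee]

theorem ee_ne_zero (x : ℂ) : ee x ≠ 0 := Complex.exp_ne_zero _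

theorem ee_intCast_mul (n : ℤ) (x : ℂ) : ee (n * x) = ee x ^ n := by
  rw [ee, ee, ← Complex.exp_int_mul, mul_left_comm]

theorem ee_eq_one_iff {x : ℂ} : ee x = 1 ↔ ∃ n : ℤ, x = n := by
  simp only [ee, Complex.exp_eq_one_iff, mul_comm _ (2 * (π : ℂ) * I),
    mul_right_inj' two_pi_I_ne_zero]

theorem ee_intCast (n : ℤ) : ee n = 1 := ee_eq_one_iff.2 ⟨n, rfl⟩

theorem differentiable_ee_ofReal_mul (z : ℂ) : Differentiable ℝ fun t : ℝ ↦ ee (t * z) := by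
  unfold ee
  fun_prop

theorem integral_ee_mul {w : ℂ} (hw : w ≠ 0) (a b : ℝ) :
    ∫ t in a..b, ee (t * w) = ee (b * w) / (2 * π * I * w) - ee (a * w) / (2 * π * I * w) := by
  have h := integral_exp_mul_complex (a := a) (b := b) (mul_ne_zero two_pi_I_ne_zero hw)
  simpa only [ee, sub_div, mul_assoc, mul_comm w] using h

theorem sum_ee_mul_intCast_eq_dirichletKernel (N : ℕ) (t : ℝ) :
    ∑ n ∈ Finset.Icc (-(N : ℤ)) N, ee (t * n) = dirichletKernel N t := by
  induction N with
  | zero => simp [dirichletKernel, ee_zero]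
  | succ N ih =>
    have hcos : ee (t * (N + 1)) + ee (t * -(N + 1)) = 2 * Real.cos (2 * π * (N + 1) * t) := by
      rw [Complex.ofReal_cos, Complex.two_cos, ee, ee]
      push_cast
      ring_nf
    rw [Nat.cast_succ, Finset.sum_Icc_succ_eq_add_endpoints, ih]
    push_cast
    rw [hcos]
    simp only [dirichletKernel, Finset.sum_range_succ]
    push_cast
    ring

theorem tendsto_integral_dirichletKernel_smul_ee (z : ℂ) {b : ℝ} (hb : b ∈ Ioo (0 : ℝ) 1) :
    Tendsto (fun N ↦ ∫ t in 0..b, dirichletKernel N t • ee (t * z)) atTop (𝓝 (1 / 2)) := by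
  have hdiff := differentiable_ee_ofReal_mul z
  have hslope : IntervalIntegrable (fun t : ℝ ↦ t⁻¹ • (ee (t * z) - 1)) volume 0 b := by
    simpa [slope_fun_def, ee_zero] using
      intervalIntegrable_slope (b := b) hdiff.continuous (hdiff 0)
  simpa using tendsto_integral_dirichletKernel_smul_of_dini hb hslope

theorem tendsto_integral_dirichletKernel_smul_ee_zero_one (z : ℂ) :
    Tendsto (fun N ↦ ∫ t in (0 : ℝ)..1, dirichletKernel N t • ee (t * z)) atTop
      (𝓝 ((1 + ee z) / 2)) := by
  have hhalf : (1 / 2 : ℝ) ∈ Ioo (0 : ℝ) 1 := by norm_num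
  have h := (tendsto_integral_dirichletKernel_smul_ee z hhalf).add
    ((tendsto_integral_dirichletKernel_smul_ee (-z) hhalf).const_mul (ee z))
  rw [mul_one_div, ← add_div] at h
  refine h.congr fun N ↦ ?_
  have hreflect : ∫ t in (1 / 2 : ℝ)..1, dirichletKernel N t • ee (t * z) =
      ee z * ∫ t in (0 : ℝ)..(1 / 2), dirichletKernel N t • ee (t * -z) := by
    have hsub := intervalIntegral.integral_comp_sub_left (a := 0) (b := 1 / 2)
      (fun t : ℝ ↦ dirichletKernel N t • ee (t * z)) 1
    norm_num only at hsub ⊢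
    rw [← hsub, ← intervalIntegral.integral_const_mul]
    refine intervalIntegral.integral_congr fun t _ ↦ ?_
    have hee : ee ((1 - t : ℝ) * z) = ee z * ee (t * -z) := by
      rw [← ee_add]
      push_cast
      ring_nf
    simp only [dirichletKernel_one_sub, hee, mul_smul_comm]
  have hInt (u v : ℝ) :
      IntervalIntegrable (fun t ↦ dirichletKernel N t • ee (t * z)) volume u v :=
    ((continuous_dirichletKernel N).smul
      (differentiable_ee_ofReal_mul z).continuous).intervalIntegrable u v
  rw [← hreflect, intervalIntegral.integral_add_adjacent_intervals (hInt _ _) (hInt _ _)]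

/-- The symmetric partial sum `∑_{|n| ≤ N} e^{2πic(z+n)} / (2πi(z+n))`. The cutoff `N` comes last,
so that `symmSum c z` is the sequence whose limit is taken. -/
def symmSum (c : ℝ) (z : ℂ) (N : ℕ) : ℂ :=
  ∑ n ∈ Finset.Icc (-(N : ℤ)) N, ee (c * (z + n)) / (2 * π * I * (z + n))

theorem symmSum_add_intCast (c : ℝ) (k : ℤ) (z : ℂ) (N : ℕ) :
    symmSum (c + k) z N = ee z ^ k * symmSum c z N := by
  simp only [symmSum, Finset.mul_sum]
  refine Finset.sum_congr rfl fun n _ ↦ ?_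
  have hexp : ((c + k : ℝ) : ℂ) * (z + n) = k * z + (c * (z + n) + (k * n : ℤ)) := by
    push_cast
    ring
  rw [hexp, ee_add, ee_add, ee_intCast, ee_intCast_mul, mul_one, mul_div_assoc]

section NonInteger

variable {z : ℂ} (hz : ∀ n : ℤ, z ≠ n)
include hz

theorem symmSum_sub_symmSum (a b : ℝ) (N : ℕ) :
    symmSum b z N - symmSum a z N = ∫ t in a..b, dirichletKernel N t • ee (t * z) := by
  have hne (n : ℤ) : z + n ≠ 0 := fun h ↦ hz (-n) (by simpa using eq_neg_of_add_eq_zero_left h)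
  have hInt (n : ℤ) : IntervalIntegrable (fun t : ℝ ↦ ee (t * (z + n))) volume a b :=
    (differentiable_ee_ofReal_mul _).continuous.intervalIntegrable a b
  simp only [symmSum, ← Finset.sum_sub_distrib, ← integral_ee_mul (hne _)]
  rw [← intervalIntegral.integral_finsetSum fun n _ ↦ hInt n]
  refine intervalIntegral.integral_congr fun t _ ↦ ?_
  simp only [mul_add, ee_add, ← Finset.mul_sum, sum_ee_mul_intCast_eq_dirichletKernel,
    Complex.real_smul, mul_comm]

theorem ee_sub_one_ne_zero : ee z - 1 ≠ 0 := fun h ↦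
  let ⟨n, hn⟩ := ee_eq_one_iff.1 (sub_eq_zero.1 h)
  hz n hn

theorem tendsto_symmSum_zero :
    Tendsto (symmSum 0 z) atTop (𝓝 (1 / 2 * (ee z + 1) / (ee z - 1))) := by
  have hne := ee_sub_one_ne_zero hz
  have h := (tendsto_integral_dirichletKernel_smul_ee_zero_one z).div_const (ee z - 1)
  convert! h.congr fun N ↦ ?_ using 2
  · ring
  · have hshift : symmSum 1 z N = ee z * symmSum 0 z N := by
      simpa using symmSum_add_intCast 0 1 z N
    rw [← symmSum_sub_symmSum hz, hshift, div_eq_iff hne]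
    ring

theorem tendsto_symmSum_of_mem_Ioo {c : ℝ} (hc : c ∈ Ioo (0 : ℝ) 1) :
    Tendsto (symmSum c z) atTop (𝓝 (ee z / (ee z - 1))) := by
  have hne := ee_sub_one_ne_zero hz
  have h := (tendsto_symmSum_zero hz).add (tendsto_integral_dirichletKernel_smul_ee z hc)
  simp only [← symmSum_sub_symmSum hz, add_sub_cancel] at h
  convert! h using 2
  field_simp
  ring

end NonInteger

/-- For every real `c` and every `z ∈ ℂ ∖ ℤ`, the symmetric limit
`lim_{N→∞} ∑_{n=-N}^{N} e^{2πi c (z+n)} / (2πi (z+n))` exists and equals `R_c(e^{2πi z})`. -/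
theorem symmetric_average_eq_Rc (c : ℝ) (z : ℂ) (hz : ∀ n : ℤ, z ≠ (n : ℂ)) :
    Filter.Tendsto
      (fun N : ℕ => ∑ n ∈ Finset.Icc (-(N : ℤ)) (N : ℤ),
        ee ((c : ℂ) * (z + (n : ℂ))) / (2 * (Real.pi : ℂ) * Complex.I * (z + (n : ℂ))))
      Filter.atTop (𝓝 (Rc c (ee z))) := by
  change Tendsto (symmSum c z) atTop _
  rw [Rc]
  split_ifs with hc
  · have h := (tendsto_symmSum_zero hz).const_mul (ee z ^ ⌈c⌉)
    simp only [← symmSum_add_intCast, zero_add, hc] at h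
    convert! h using 2
    ring
  · have hceil : ⌈c⌉ = ⌊c⌋ + 1 := by
      rw [Int.ceil_eq_floor_add_one_iff_notMem]
      rintro ⟨n, rfl⟩
      simp at hc
    have hfract : Int.fract c ∈ Ioo (0 : ℝ) 1 :=
      ⟨Int.fract_pos.2 fun h ↦ hc (by rw [h]; simp), Int.fract_lt_one c⟩
    have h := (tendsto_symmSum_of_mem_Ioo hz hfract).const_mul (ee z ^ ⌊c⌋)
    simp only [← symmSum_add_intCast, Int.fract_add_floor] at h
    rwa [hceil, zpow_add_one₀ (ee_ne_zero z), mul_div_assoc]
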